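/- There exists a constant c > 0 such that every C₅-free graph G with n > 1 vertices contains an induced subgraph that is a cograph with at least 2^{c·√(log n · log log n)} vertices. -/

import Mathlib

open SimpleGraph

/-- `G` is `C₅`-free: no induced subgraph of `G` is isomorphic to the 5-cycle. -/
def C5Free {V : Type} (G : SimpleGraph V) : Prop :=
  ¬ Nonempty (cycleGraph 5 ↪g G)

/-- A cograph is a graph with no induced path on 4 vertices. -/
def IsCograph {V : Type} (G : SimpleGraph V) : Prop :=
  ¬ Nonempty (pathGraph 4 ↪g G)

open scoped Classical in
/-- neighbours of `x` inside `B` -/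
noncomputable def nbr {V : Type} (H : SimpleGraph V) (B : Finset V) (x : V) : Finset V :=
  B.filter (fun y => H.Adj x y)

open scoped Classical in
/-- the vertices of `S` with a neighbour in `T` -/
noncomputable def cov {V : Type} (H : SimpleGraph V) (T S : Finset V) : Finset V :=
  S.filter (fun y => ∃ t ∈ T, H.Adj t y)

def NoC5 {V : Type} (H : SimpleGraph V) : Prop :=
  ∀ a b c d e : V, H.Adj a b → H.Adj b c → H.Adj c d → H.Adj d e → H.Adj e a →
    ¬ H.Adj a c → ¬ H.Adj b d → ¬ H.Adj c e → ¬ H.Adj d a → ¬ H.Adj e b → False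

def Sparse {V : Type} (H : SimpleGraph V) (ε : ℝ) (A B : Finset V) : Prop :=
  ∀ x ∈ A, ((nbr H B x).card : ℝ) ≤ ε * B.card

def Cog {V : Type} (H : SimpleGraph V) (s : Finset V) : Prop :=
  ∀ a ∈ s, ∀ b ∈ s, ∀ c ∈ s, ∀ d ∈ s, H.Adj a b → H.Adj b c → H.Adj c d →
    ¬ H.Adj a c → ¬ H.Adj b d → ¬ H.Adj a d → False

theorem mem_nbr {V : Type} {H : SimpleGraph V} {B : Finset V} {x y : V} :
    y ∈ nbr H B x ↔ y ∈ B ∧ H.Adj x y := by simp [nbr]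

theorem mem_cov {V : Type} {H : SimpleGraph V} {T S : Finset V} {y : V} :
    y ∈ cov H T S ↔ y ∈ S ∧ ∃ t ∈ T, H.Adj t y := by simp [cov]

theorem nbr_sub {V : Type} {H : SimpleGraph V} {B : Finset V} {x : V} : nbr H B x ⊆ B :=
  fun _ hy => (mem_nbr.1 hy).1

theorem cov_sub {V : Type} {H : SimpleGraph V} {T S : Finset V} : cov H T S ⊆ S :=
  fun _ hy => (mem_cov.1 hy).1

theorem NoC5.compl {V : Type} {G : SimpleGraph V} (h : NoC5 G) : NoC5 Gᶜ := by
  intro a b c d e ab bc cd de ea ac bd ce da eb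
  have hac : a ≠ c := by rintro rfl; exact da cd.symm
  have hbd : b ≠ d := by rintro rfl; exact eb de.symm
  have hce : c ≠ e := by rintro rfl; exact ac ea.symm
  have hda : d ≠ a := by rintro rfl; exact bd ab.symm
  have heb : e ≠ b := by rintro rfl; exact ce bc.symm
  simp only [SimpleGraph.compl_adj, not_and, not_not] at *
  exact h a c e b d (ac hac) (ce hce) (eb heb) (bd hbd) (da hda)
    (fun h => ea.2 h.symm) (fun h => bc.2 h.symm) (fun h => de.2 h.symm)
    (fun h => ab.2 h.symm) (fun h => cd.2 h.symm)

theorem C5Free.noC5 {V : Type} {G : SimpleGraph V} (h : C5Free G) : NoC5 G := by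
  intro a b c d e ab bc cd de ea ac bd ce da eb
  have hac : a ≠ c := by rintro rfl; exact da cd.symm
  have hbd : b ≠ d := by rintro rfl; exact eb de.symm
  have hce : c ≠ e := by rintro rfl; exact ac ea.symm
  have hda : d ≠ a := by rintro rfl; exact bd ab.symm
  have heb : e ≠ b := by rintro rfl; exact ce bc.symm
  apply h
  refine ⟨⟨⟨![a, b, c, d, e], ?_⟩, ?_⟩⟩
  · intro i j hij
    have := ab.ne; have := bc.ne; have := cd.ne; have := de.ne; have := ea.ne
    fin_cases i <;> fin_cases j <;> simp_all
  · intro i j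
    have ab' := ab.symm; have bc' := bc.symm; have cd' := cd.symm
    have de' := de.symm; have ea' := ea.symm
    have ac' : ¬ G.Adj c a := fun h => ac h.symm
    have bd' : ¬ G.Adj d b := fun h => bd h.symm
    have ce' : ¬ G.Adj e c := fun h => ce h.symm
    have da' : ¬ G.Adj a d := fun h => da h.symm
    have eb' : ¬ G.Adj b e := fun h => eb h.symm
    have irr : ∀ x, ¬ G.Adj x x := fun x => G.irrefl
    rw [SimpleGraph.cycleGraph_adj']
    change G.Adj (![a, b, c, d, e] i) (![a, b, c, d, e] j) ↔ _
    fin_cases i <;> fin_cases j <;>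
      first
      | exact iff_of_false (irr _) (by decide)
      | refine iff_of_true ?_ (by decide)
        first
        | exact ab | exact bc | exact cd | exact de | exact ea
        | exact ab' | exact bc' | exact cd' | exact de' | exact ea'
      | refine iff_of_false ?_ (by decide)
        first
        | exact ac | exact bd | exact ce | exact da | exact eb
        | exact ac' | exact bd' | exact ce' | exact da' | exact eb'

theorem Cog.isCograph {V : Type} {G : SimpleGraph V} {s : Finset V} (h : Cog G s) :
    IsCograph (G.induce (s : Set V)) := by
  rintro ⟨f⟩
  have key : ∀ i j, G.Adj (f i) (f j) ↔ (SimpleGraph.pathGraph 4).Adj i j := fun i j => f.map_rel_iff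
  have hp : ∀ i j : Fin 4, (SimpleGraph.pathGraph 4).Adj i j ↔ (i.val + 1 = j.val ∨ j.val + 1 = i.val) :=
    fun i j => SimpleGraph.pathGraph_adj
  refine h _ (f 0).2 _ (f 1).2 _ (f 2).2 _ (f 3).2 ?_ ?_ ?_ ?_ ?_ ?_ <;> rw [key, hp] <;> decide

theorem Cog.mono {V : Type} {G : SimpleGraph V} {s t : Finset V} (h : Cog G s) (hts : t ⊆ s) :
    Cog G t := fun a ha b hb c hc d hd =>
  h a (hts ha) b (hts hb) c (hts hc) d (hts hd)

open scoped Classical in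
theorem Cog.union {V : Type} {G H : SimpleGraph V} {s t : Finset V} (hs : Cog G s) (ht : Cog G t)
    (hH : H = G ∨ H = Gᶜ) (hd : Disjoint s t) (hst : ∀ x ∈ s, ∀ y ∈ t, ¬ H.Adj x y) :
    Cog G (s ∪ t) := by
  intro a ha b hb c hc d hd' ab bc cd ac bd ad
  have ba := ab.symm
  have cb := bc.symm
  have dc := cd.symm
  rw [Finset.mem_union] at ha hb hc hd'
  have ac' : ¬ G.Adj c a := fun h => ac h.symm
  have bd' : ¬ G.Adj d b := fun h => bd h.symm
  have ad' : ¬ G.Adj d a := fun h => ad h.symm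
  rcases hH with rfl | rfl
  · have := hs a; have := ht a
    grind
  · have hst' : ∀ x ∈ s, ∀ y ∈ t, G.Adj x y := by
      intro x hx y hy
      have hne : x ≠ y := by
        rintro rfl
        exact Finset.disjoint_left.1 hd hx hy
      have := hst x hx y hy
      rw [SimpleGraph.compl_adj] at this
      tauto
    have := hs a; have := ht a
    grind

/-- four-fold step of the embedding argument -/
theorem step4 {V : Type} {G : SimpleGraph V} {W : Finset V} {s η : ℝ}
    (K : ∀ H, (H = G ∨ H = Gᶜ) → ∀ A B : Finset V, A ⊆ W → B ⊆ W → s ≤ A.card → s ≤ B.card →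
      ¬ Sparse H η A B)
    (hs : 0 < s) (X : Finset V) (hX : X ⊆ W) (hXs : 4 * s ≤ X.card)
    (Y : Fin 4 → Finset V) (H : Fin 4 → SimpleGraph V) (hH : ∀ i, H i = G ∨ H i = Gᶜ)
    (hY : ∀ i, Y i ⊆ W) (hYs : ∀ i, s ≤ (Y i).card) :
    ∃ x ∈ X, ∀ i, η * (Y i).card < (nbr (H i) (Y i) x).card := by
  classical
  by_contra! hcon
  let bad : Fin 4 → Finset V := fun i =>
    X.filter (fun x => ((nbr (H i) (Y i) x).card : ℝ) ≤ η * (Y i).card)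
  have hb : ∀ i, ((bad i).card : ℝ) < s := by
    intro i
    by_contra! h
    refine K (H i) (hH i) (bad i) (Y i) ((Finset.filter_subset _ _).trans hX) (hY i) h (hYs i) ?_
    intro x hx
    exact (Finset.mem_filter.1 hx).2
  have hsub : X ⊆ Finset.univ.biUnion bad := by
    intro x hx
    obtain ⟨i, hi⟩ := hcon x hx
    exact Finset.mem_biUnion.2 ⟨i, Finset.mem_univ _, Finset.mem_filter.2 ⟨hx, hi⟩⟩
  have h1 := (Finset.card_le_card hsub).trans Finset.card_biUnion_le
  have h2 : (X.card : ℝ) ≤ ∑ i, ((bad i).card : ℝ) := by exact_mod_cast h1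
  rw [Fin.sum_univ_four] at h2
  linarith [hb 0, hb 1, hb 2, hb 3]

theorem eh_lemma (η : ℝ) (h0 : 0 < η) (h1 : η ≤ 1) :
    ∃ c : ℝ, 0 < c ∧ c ≤ 1 ∧ ∀ (V : Type) (G : SimpleGraph V), NoC5 G →
      ∀ W : Finset V, W.Nonempty → ∃ A B : Finset V, A ⊆ W ∧ B ⊆ W ∧
        c * W.card ≤ A.card ∧ c * W.card ≤ B.card ∧ (Sparse G η A B ∨ Sparse Gᶜ η A B) := by
  have e2 : η ^ 2 ≤ 1 := pow_le_one₀ h0.le h1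
  have e3 : η ^ 3 ≤ 1 := pow_le_one₀ h0.le h1
  refine ⟨η ^ 3 / 4, by positivity, by linarith, ?_⟩
  intro V G hG W hW
  by_contra! hcon
  have hWc : (0 : ℝ) < W.card := by exact_mod_cast hW.card_pos
  set n : ℝ := (W.card : ℝ) with hn
  set s : ℝ := η ^ 3 / 4 * n with hs
  have hs0 : 0 < s := by positivity
  have K : ∀ H, (H = G ∨ H = Gᶜ) → ∀ A B : Finset V, A ⊆ W → B ⊆ W → s ≤ A.card → s ≤ B.card →
      ¬ Sparse H η A B := by
    rintro H (rfl | rfl) A B hA hB hAs hBs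
    · exact (hcon A B hA hB hAs hBs).1
    · exact (hcon A B hA hB hAs hBs).2
  have b3 : 4 * s = η * (η * (η * n)) := by rw [hs]; ring
  have b2 : η * (η * (η * n)) ≤ η * (η * n) := by
    have : 0 < η * (η * n) := by positivity
    nlinarith
  have b1 : η * (η * n) ≤ η * n := by
    have : 0 < η * n := by positivity
    nlinarith
  have b0 : η * n ≤ n := by nlinarith
  have co : ∀ {x y : V}, Gᶜ.Adj x y → ¬ G.Adj x y := fun h => ((SimpleGraph.compl_adj _ _ _).1 h).2
  obtain ⟨a, ha, ha'⟩ := step4 K hs0 W subset_rfl (by linarith) ![W, W, W, W] ![G, Gᶜ, Gᶜ, G]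
    (by intro i; fin_cases i <;> simp) (by intro i; fin_cases i <;> simp)
    (by intro i; fin_cases i <;> simp <;> linarith)
  have aB := ha' 0; have aC := ha' 1; have aD := ha' 2; have aE := ha' 3
  simp only [Matrix.cons_val] at aB aC aD aE
  set B := nbr G W a with hB
  set C := nbr Gᶜ W a with hC
  have hBW : B ⊆ W := nbr_sub
  have hCW : C ⊆ W := nbr_sub
  obtain ⟨b, hb, hb'⟩ := step4 K hs0 B hBW (by linarith) ![C, C, B, B] ![G, Gᶜ, Gᶜ, Gᶜ]
    (by intro i; fin_cases i <;> simp) (by intro i; fin_cases i <;> simp [hBW, hCW])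
    (by intro i; fin_cases i <;> simp <;> linarith)
  have bC := hb' 0; have bD := hb' 1; have bE := hb' 2
  simp only [Matrix.cons_val] at bC bD bE
  set C' := nbr G C b
  set D' := nbr Gᶜ C b
  set E' := nbr Gᶜ B b
  have hC' : C' ⊆ W := nbr_sub.trans hCW
  have hD' : D' ⊆ W := nbr_sub.trans hCW
  have hE' : E' ⊆ W := nbr_sub.trans hBW
  have mC : η * (η * n) ≤ η * C.card := mul_le_mul_of_nonneg_left aC.le h0.le
  have mB : η * (η * n) ≤ η * B.card := mul_le_mul_of_nonneg_left aB.le h0.le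
  obtain ⟨c, hc, hc'⟩ := step4 K hs0 C' hC' (by linarith) ![D', E', E', E'] ![G, Gᶜ, Gᶜ, Gᶜ]
    (by intro i; fin_cases i <;> simp) (by intro i; fin_cases i <;> simp [hD', hE'])
    (by intro i; fin_cases i <;> simp <;> linarith)
  have cD := hc' 0; have cE := hc' 1
  simp only [Matrix.cons_val] at cD cE
  set D'' := nbr G D' c
  set E'' := nbr Gᶜ E' c
  have hD'' : D'' ⊆ W := nbr_sub.trans hD'
  have hE'' : E'' ⊆ W := nbr_sub.trans hE'
  have mD : η * (η * (η * n)) ≤ η * D'.card :=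
    mul_le_mul_of_nonneg_left (mC.trans bD.le) h0.le
  have mE : η * (η * (η * n)) ≤ η * E'.card :=
    mul_le_mul_of_nonneg_left (mB.trans bE.le) h0.le
  obtain ⟨d, hd, hd'⟩ := step4 K hs0 D'' hD'' (by linarith) ![E'', E'', E'', E''] ![G, G, G, G]
    (by intro i; fin_cases i <;> simp) (by intro i; fin_cases i <;> simp [hE''])
    (by intro i; fin_cases i <;> simp <;> linarith)
  have dE := hd' 0
  simp only [Matrix.cons_val] at dE
  have : 0 < (nbr G E'' d).card := by
    have : (0 : ℝ) < (nbr G E'' d).card := lt_of_le_of_lt (by positivity) dE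
    exact_mod_cast this
  obtain ⟨e, he⟩ := Finset.card_pos.1 this
  have he1 := mem_nbr.1 he
  have he2 := mem_nbr.1 he1.1
  have he3 := mem_nbr.1 he2.1
  have he4 := mem_nbr.1 he3.1
  have hd1 := mem_nbr.1 hd
  have hd2 := mem_nbr.1 hd1.1
  have hd3 := mem_nbr.1 hd2.1
  have hc1 := mem_nbr.1 hc
  have hc2 := mem_nbr.1 hc1.1
  have hb1 := mem_nbr.1 hb
  exact hG a b c d e hb1.2 hc1.2 hd1.2 he1.2 he4.2.symm (co hc2.2) (co hd2.2) (co he2.2)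
    (fun h => co hd3.2 h.symm) (fun h => co he3.2 h.symm)

theorem ramsey_blocks (N : ℕ) : ∀ p q : ℕ, p + q = N → ∀ δ : ℝ, 0 < δ → δ ≤ 1 →
    ∃ c : ℝ, 0 < c ∧ c ≤ 1 ∧ ∀ (V : Type) (G : SimpleGraph V), NoC5 G →
      ∀ W : Finset V, W.Nonempty → ∃ l : List (Finset V),
        (∀ A ∈ l, A ⊆ W ∧ c * W.card ≤ A.card) ∧
        ((l.length = p ∧ l.Pairwise (Sparse G δ)) ∨ (l.length = q ∧ l.Pairwise (Sparse Gᶜ δ))) := by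
  induction N with
  | zero =>
    intro p q hpq δ _ _
    refine ⟨1, one_pos, le_rfl, fun V G _ W _ => ⟨[], by simp, Or.inl ⟨?_, by simp⟩⟩⟩
    simp; omega
  | succ N ih =>
    intro p q hpq δ hδ hδ1
    rcases p with _ | p
    · exact ⟨1, one_pos, le_rfl, fun V G _ W _ => ⟨[], by simp, Or.inl ⟨by simp, by simp⟩⟩⟩
    rcases q with _ | q
    · exact ⟨1, one_pos, le_rfl, fun V G _ W _ => ⟨[], by simp, Or.inr ⟨by simp, by simp⟩⟩⟩
    obtain ⟨c1, h1, h1', H1⟩ := ih p (q + 1) (by omega) δ hδ hδ1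
    obtain ⟨c2, h2, h2', H2⟩ := ih (p + 1) q (by omega) δ hδ hδ1
    set m := min c1 c2 with hm
    have hm0 : 0 < m := lt_min h1 h2
    have hm1 : m ≤ c1 := min_le_left _ _
    have hm2 : m ≤ c2 := min_le_right _ _
    obtain ⟨c, hc, hc1, HE⟩ := eh_lemma (δ * m) (by positivity) (by nlinarith)
    have hcm : c * m ≤ c := by nlinarith
    refine ⟨c * m, by positivity, by linarith, ?_⟩
    intro V G hG W hW
    obtain ⟨A, B, hA, hB, hAc, hBc, hS⟩ := HE V G hG W hW
    have hWc : (0 : ℝ) < W.card := by exact_mod_cast hW.card_pos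
    have hBpos : (0 : ℝ) < B.card := lt_of_lt_of_le (by positivity) hBc
    have hBne : B.Nonempty := Finset.card_pos.1 (by exact_mod_cast hBpos)
    -- restriction of sparsity
    have restr : ∀ H : SimpleGraph V, Sparse H (δ * m) A B → ∀ S : Finset V, S ⊆ B →
        m * B.card ≤ S.card → Sparse H δ A S := by
      intro H hH S hS hSc x hx
      have e1 : ((nbr H S x).card : ℝ) ≤ (nbr H B x).card := by
        exact_mod_cast Finset.card_le_card (fun y hy => mem_nbr.2 ⟨hS (mem_nbr.1 hy).1, (mem_nbr.1 hy).2⟩)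
      have e2 := hH x hx
      have e3 : δ * (m * B.card) ≤ δ * S.card := mul_le_mul_of_nonneg_left hSc hδ.le
      linarith
    have sz : ∀ S : Finset V, m * B.card ≤ S.card → c * m * W.card ≤ S.card := by
      intro S hS
      have : m * (c * W.card) ≤ m * B.card := mul_le_mul_of_nonneg_left hBc hm0.le
      linarith
    have szA : c * m * W.card ≤ A.card := by
      have : c * m * W.card ≤ c * W.card := mul_le_mul_of_nonneg_right hcm hWc.le
      linarith
    rcases hS with hS | hS
    · obtain ⟨l, hl, hl'⟩ := H1 V G hG B hBne
      have hl2 : ∀ S ∈ l, S ⊆ B ∧ m * B.card ≤ S.card := fun S hSl =>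
        ⟨(hl S hSl).1, (mul_le_mul_of_nonneg_right hm1 hBpos.le).trans (hl S hSl).2⟩
      rcases hl' with ⟨hl3, hl4⟩ | hl'
      · refine ⟨A :: l, ?_, Or.inl ⟨by simp [hl3], ?_⟩⟩
        · intro S hSl
          rcases List.mem_cons.1 hSl with rfl | hSl
          · exact ⟨hA, szA⟩
          · exact ⟨(hl2 S hSl).1.trans hB, sz S (hl2 S hSl).2⟩
        · refine List.pairwise_cons.2 ⟨fun S hSl => restr G hS S (hl2 S hSl).1 (hl2 S hSl).2, hl4⟩
      · exact ⟨l, fun S hSl => ⟨(hl2 S hSl).1.trans hB, sz S (hl2 S hSl).2⟩, Or.inr hl'⟩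
    · obtain ⟨l, hl, hl'⟩ := H2 V G hG B hBne
      have hl2 : ∀ S ∈ l, S ⊆ B ∧ m * B.card ≤ S.card := fun S hSl =>
        ⟨(hl S hSl).1, (mul_le_mul_of_nonneg_right hm2 hBpos.le).trans (hl S hSl).2⟩
      rcases hl' with hl' | ⟨hl3, hl4⟩
      · exact ⟨l, fun S hSl => ⟨(hl2 S hSl).1.trans hB, sz S (hl2 S hSl).2⟩, Or.inl hl'⟩
      · refine ⟨A :: l, ?_, Or.inr ⟨by simp [hl3], ?_⟩⟩
        · intro S hSl
          rcases List.mem_cons.1 hSl with rfl | hSl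
          · exact ⟨hA, szA⟩
          · exact ⟨(hl2 S hSl).1.trans hB, sz S (hl2 S hSl).2⟩
        · refine List.pairwise_cons.2 ⟨fun S hSl => restr Gᶜ hS S (hl2 S hSl).1 (hl2 S hSl).2, hl4⟩

open scoped Classical in
theorem card_sdiff_ge {V : Type} (A B C : Finset V) (h : A ∩ B ⊆ C) :
    (A.card : ℝ) - C.card ≤ ((A \ B).card : ℝ) := by
  have h1 : A.card ≤ (A \ B).card + C.card := by
    have := Finset.card_sdiff_add_card_inter A B
    have := Finset.card_le_card h
    omega
  have : (A.card : ℝ) ≤ (A \ B).card + C.card := by exact_mod_cast h1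
  linarith

open scoped Classical in
theorem card_sdiff_ge' {V : Type} (A B : Finset V) :
    (A.card : ℝ) - B.card ≤ ((A \ B).card : ℝ) :=
  card_sdiff_ge A B B Finset.inter_subset_right

/-- The hypothesis used for contradiction: no one-sided sparse pair. -/
def NoPair {V : Type} (H : SimpleGraph V) (W : Finset V) (a b ε : ℝ) : Prop :=
  ∀ A B : Finset V, A ⊆ W → B ⊆ W → a ≤ A.card → b ≤ B.card →
    ∃ x ∈ A, ε * B.card < (nbr H B x).card

theorem NoPair.edge {V : Type} {H : SimpleGraph V} {W : Finset V} {a b ε : ℝ}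
    (K : NoPair H W a b ε) (hε : 0 < ε) {A B : Finset V} (hA : A ⊆ W) (hB : B ⊆ W)
    (ha : a ≤ A.card) (hb : b ≤ B.card) : ∃ x ∈ A, ∃ y ∈ B, H.Adj x y := by
  obtain ⟨x, hx, h⟩ := K A B hA hB ha hb
  have : (0 : ℝ) < (nbr H B x).card := lt_of_le_of_lt (by positivity) h
  obtain ⟨y, hy⟩ := Finset.card_pos.1 (by exact_mod_cast this : 0 < (nbr H B x).card)
  exact ⟨x, hx, y, (mem_nbr.1 hy).1, (mem_nbr.1 hy).2⟩

theorem core2 {V : Type} {H : SimpleGraph V} (hH : NoC5 H) {W : Finset V} {a b ε : ℝ}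
    (hε : 0 < ε) (K : NoPair H W a b ε) (v : V) (N T X Y : Finset V)
    (hNW : N ⊆ W) (hXW : X ⊆ W) (hYW : Y ⊆ W) (hTN : T ⊆ N)
    (hN : a ≤ N.card) (hvN : ∀ x ∈ N, H.Adj v x)
    (hXb : b ≤ X.card / 16) (hYb : b ≤ Y.card / 16)
    (hXa : a ≤ ε * (X.card / 2)) (hYa : a ≤ ε * (Y.card / 2))
    (hvX : ((nbr H X v).card : ℝ) ≤ X.card / 32) (hvY : ((nbr H Y v).card : ℝ) ≤ Y.card / 32)
    (hNX : ∀ p ∈ N, ((nbr H X p).card : ℝ) ≤ X.card / 32)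
    (hYX : ∀ y ∈ Y, ((nbr H X y).card : ℝ) ≤ X.card / 32)
    (hT1 : X.card / 4 ≤ ((cov H T X).card : ℝ))
    (hT2 : ((cov H T X).card : ℝ) ≤ X.card / 4 + X.card / 32)
    (hT3 : ((cov H T Y).card : ℝ) ≤ Y.card / 4 + Y.card / 32) : False := by
  classical
  have hX0 : (0 : ℝ) ≤ X.card := by positivity
  have hY0 : (0 : ℝ) ≤ Y.card := by positivity
  -- find p
  set Y0 := (Y \ cov H T Y) \ nbr H Y v with hY0def
  have hY0c : (Y.card : ℝ) / 2 ≤ Y0.card := by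
    have h1 := card_sdiff_ge' (Y \ cov H T Y) (nbr H Y v)
    have h2 := card_sdiff_ge' Y (cov H T Y)
    linarith
  have hY0W : Y0 ⊆ W := (Finset.sdiff_subset.trans Finset.sdiff_subset).trans hYW
  obtain ⟨p, hp, hpP⟩ := K N Y0 hNW hY0W hN (by linarith)
  set P := nbr H Y0 p with hP
  have hPW : P ⊆ W := nbr_sub.trans hY0W
  have hPa : a ≤ P.card := by
    have := mul_le_mul_of_nonneg_left hY0c hε.le
    linarith
  have hPprop : ∀ x ∈ P, x ∈ Y ∧ H.Adj p x ∧ ¬ H.Adj v x ∧ ∀ t ∈ T, ¬ H.Adj t x := by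
    intro x hx
    obtain ⟨hx1, hx2⟩ := mem_nbr.1 hx
    simp only [hY0def, Finset.mem_sdiff, mem_nbr, mem_cov, not_and, not_exists] at hx1
    obtain ⟨⟨h1, h2⟩, h3⟩ := hx1
    exact ⟨h1, hx2, h3 h1, fun t ht => h2 h1 t ht⟩
  set T1 := T.filter (fun t => H.Adj p t) with hT1def
  set T2 := T.filter (fun t => ¬ H.Adj p t) with hT2def
  have hsplit : ((cov H T X).card : ℝ) ≤ (cov H T1 X).card + (cov H T2 X).card := by
    have : cov H T X ⊆ cov H T1 X ∪ cov H T2 X := by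
      intro x hx
      obtain ⟨hx1, t, ht, htx⟩ := mem_cov.1 hx
      by_cases hpt : H.Adj p t
      · exact Finset.mem_union_left _ (mem_cov.2 ⟨hx1, t, Finset.mem_filter.2 ⟨ht, hpt⟩, htx⟩)
      · exact Finset.mem_union_right _ (mem_cov.2 ⟨hx1, t, Finset.mem_filter.2 ⟨ht, hpt⟩, htx⟩)
    exact_mod_cast (Finset.card_le_card this).trans (Finset.card_union_le _ _)
  have hpX := hNX p hp
  by_cases hcase : (X.card : ℝ) / 8 ≤ (cov H T2 X).card
  · -- nonadjacent case
    set Q := (cov H T2 X \ nbr H X p) \ nbr H X v with hQ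
    have hQc : (X.card : ℝ) / 16 ≤ Q.card := by
      have h1 := card_sdiff_ge' (cov H T2 X \ nbr H X p) (nbr H X v)
      have h2 := card_sdiff_ge' (cov H T2 X) (nbr H X p)
      linarith
    have hQW : Q ⊆ W := ((Finset.sdiff_subset.trans Finset.sdiff_subset).trans cov_sub).trans hXW
    obtain ⟨x, hx, z, hz, hxz⟩ := K.edge hε hPW hQW hPa (by linarith)
    obtain ⟨-, hpx, hvx, hTx⟩ := hPprop x hx
    simp only [hQ, Finset.mem_sdiff, mem_nbr, mem_cov, not_and] at hz
    obtain ⟨⟨⟨hzX, q, hq, hqz⟩, hz2⟩, hz3⟩ := hz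
    obtain ⟨hqT, hpq⟩ := Finset.mem_filter.1 hq
    exact hH v p x z q (hvN p hp) hpx hxz hqz.symm (hvN q (hTN hqT)).symm hvx (hz2 hzX)
      (fun h => hTx q hqT h.symm) (fun h => hz3 hzX h.symm) (fun h => hpq h.symm)
  · -- adjacent case
    have hT1c : (X.card : ℝ) / 8 ≤ (cov H T1 X).card := by linarith
    set W' := (X \ cov H T X) \ nbr H X p with hW'
    have hW'c : (X.card : ℝ) / 2 ≤ W'.card := by
      have h1 := card_sdiff_ge' (X \ cov H T X) (nbr H X p)
      have h2 := card_sdiff_ge' X (cov H T X)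
      linarith
    have hW'W : W' ⊆ W := (Finset.sdiff_subset.trans Finset.sdiff_subset).trans hXW
    obtain ⟨u, hu, huM⟩ := K P W' hPW hW'W hPa (by linarith)
    obtain ⟨huY, hpu, -, hTu⟩ := hPprop u hu
    set M := nbr H W' u with hM
    have hMa : a ≤ M.card := by
      have := mul_le_mul_of_nonneg_left hW'c hε.le
      linarith
    set Q := (cov H T1 X \ nbr H X p) \ nbr H X u with hQ
    have hQc : (X.card : ℝ) / 16 ≤ Q.card := by
      have h1 := card_sdiff_ge' (cov H T1 X \ nbr H X p) (nbr H X u)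
      have h2 := card_sdiff_ge' (cov H T1 X) (nbr H X p)
      have h3 := hYX u huY
      linarith
    have hQW : Q ⊆ W := ((Finset.sdiff_subset.trans Finset.sdiff_subset).trans cov_sub).trans hXW
    obtain ⟨w, hw, z, hz, hwz⟩ := K.edge hε (nbr_sub.trans hW'W) hQW hMa (by linarith)
    obtain ⟨hw1, huw⟩ := mem_nbr.1 hw
    simp only [hW', Finset.mem_sdiff, mem_nbr, mem_cov, not_and, not_exists] at hw1
    obtain ⟨⟨hwX, hw2⟩, hw3⟩ := hw1
    simp only [hQ, Finset.mem_sdiff, mem_nbr, mem_cov, not_and] at hz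
    obtain ⟨⟨⟨hzX, q, hq, hqz⟩, hz2⟩, hz3⟩ := hz
    obtain ⟨hqT, hpq⟩ := Finset.mem_filter.1 hq
    exact hH p q z w u hpq hqz hwz.symm huw.symm hpu.symm (hz2 hzX) (hw2 hwX q hqT)
      (fun h => hz3 hzX h.symm) (fun h => hw3 hwX h.symm) (fun h => hTu q hqT h.symm)

theorem core {V : Type} {H : SimpleGraph V} (hH : NoC5 H) {W : Finset V} {a b ε : ℝ}
    (hε : 0 < ε) (K : NoPair H W a b ε) (v : V) (N X Y : Finset V)
    (hNW : N ⊆ W) (hXW : X ⊆ W) (hYW : Y ⊆ W) (hX0 : (0 : ℝ) < X.card) (hY0 : (0 : ℝ) < Y.card)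
    (hN : a ≤ N.card) (hvN : ∀ x ∈ N, H.Adj v x)
    (hXb : b ≤ X.card / 16) (hYb : b ≤ Y.card / 16)
    (hXa : a ≤ ε * (X.card / 2)) (hYa : a ≤ ε * (Y.card / 2))
    (hvX : ((nbr H X v).card : ℝ) ≤ X.card / 32) (hvY : ((nbr H Y v).card : ℝ) ≤ Y.card / 32)
    (hNX : ∀ p ∈ N, ((nbr H X p).card : ℝ) ≤ X.card / 32)
    (hNY : ∀ p ∈ N, ((nbr H Y p).card : ℝ) ≤ Y.card / 32)
    (hYX : ∀ y ∈ Y, ((nbr H X y).card : ℝ) ≤ X.card / 32)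
    (hXY : ∀ x ∈ X, ((nbr H Y x).card : ℝ) ≤ Y.card / 32) : False := by
  classical
  let good : Finset V → Prop := fun T =>
    (X.card : ℝ) / 4 ≤ (cov H T X).card ∨ (Y.card : ℝ) / 4 ≤ (cov H T Y).card
  have hgN : good N := by
    left
    by_contra! h
    have h1 := card_sdiff_ge' X (cov H N X)
    obtain ⟨x, hx, y, hy, hxy⟩ := K.edge hε hNW (Finset.sdiff_subset.trans hXW :
      X \ cov H N X ⊆ W) hN (by linarith)
    rw [Finset.mem_sdiff] at hy
    exact hy.2 (mem_cov.2 ⟨hy.1, x, hx, hxy⟩)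
  -- minimal good T
  obtain ⟨T, hT, hTmin⟩ := Finset.exists_min_image (N.powerset.filter good) Finset.card
    ⟨N, Finset.mem_filter.2 ⟨Finset.mem_powerset_self N, hgN⟩⟩
  obtain ⟨hTN, hTg⟩ := Finset.mem_filter.1 hT
  rw [Finset.mem_powerset] at hTN
  have hTne : T.Nonempty := by
    rw [Finset.nonempty_iff_ne_empty]
    rintro rfl
    have e : ∀ S, cov H ∅ S = ∅ := fun S => by ext; simp [mem_cov]
    rcases hTg with h | h
    · rw [e] at h; simp at h; linarith
    · rw [e] at h; simp at h; linarith
  obtain ⟨t, ht⟩ := hTne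
  have hbad : ¬ good (T.erase t) := by
    intro h
    have := hTmin (T.erase t) (Finset.mem_filter.2
      ⟨Finset.mem_powerset.2 ((Finset.erase_subset _ _).trans hTN), h⟩)
    have := Finset.card_erase_lt_of_mem ht
    omega
  have hbad' : ((cov H (T.erase t) X).card : ℝ) < X.card / 4 ∧
    ((cov H (T.erase t) Y).card : ℝ) < Y.card / 4 := by
    simpa only [good, not_or, not_le] using hbad
  have hstep : ∀ S, ((cov H T S).card : ℝ) ≤ (cov H (T.erase t) S).card + (nbr H S t).card := by
    intro S
    have : cov H T S ⊆ cov H (T.erase t) S ∪ nbr H S t := by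
      intro x hx
      obtain ⟨hx1, q, hq, hqx⟩ := mem_cov.1 hx
      by_cases hqt : q = t
      · subst hqt
        exact Finset.mem_union_right _ (mem_nbr.2 ⟨hx1, hqx⟩)
      · exact Finset.mem_union_left _ (mem_cov.2 ⟨hx1, q, Finset.mem_erase.2 ⟨hqt, hq⟩, hqx⟩)
    exact_mod_cast (Finset.card_le_card this).trans (Finset.card_union_le _ _)
  have h1 := hstep X
  have h2 := hstep Y
  have h3 := hNX t (hTN ht)
  have h4 := hNY t (hTN ht)
  rcases hTg with h | h
  · exact core2 hH hε K v N T X Y hNW hXW hYW hTN hN hvN hXb hYb hXa hYa hvX hvY hNX hYX h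
      (by linarith) (by linarith)
  · exact core2 hH hε K v N T Y X hNW hYW hXW hTN hN hvN hYb hXb hYa hXa hvY hvX hNY hXY h
      (by linarith) (by linarith)

/-- Cleaning: most vertices of `Y` have few neighbours in `X`. -/
theorem clean {V : Type} {H : SimpleGraph V} {X Y : Finset V} (hX0 : (0 : ℝ) < X.card)
    (h : Sparse H (1 / 128) X Y) : ∃ Y' ⊆ Y, (3 / 4 : ℝ) * Y.card ≤ Y'.card ∧
      ∀ y ∈ Y', ((nbr H X y).card : ℝ) ≤ X.card / 32 := by
  classical
  refine ⟨Y.filter (fun y => ((nbr H X y).card : ℝ) ≤ X.card / 32), Finset.filter_subset _ _, ?_,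
    fun y hy => (Finset.mem_filter.1 hy).2⟩
  set Y1 := Y.filter (fun y => ((nbr H X y).card : ℝ) ≤ X.card / 32)
  set Y2 := Y.filter (fun y => ¬ ((nbr H X y).card : ℝ) ≤ X.card / 32) with hY2
  have hsum : (Y1.card : ℝ) + Y2.card = Y.card := by
    exact_mod_cast Finset.card_filter_add_card_filter_not (s := Y) _
  have hdc : ∑ x ∈ X, (nbr H Y x).card = ∑ y ∈ Y, (nbr H X y).card := by
    have := Finset.sum_card_bipartiteAbove_eq_sum_card_bipartiteBelow (s := X) (t := Y)
      (fun x y => H.Adj x y)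
    simp only [Finset.bipartiteAbove, Finset.bipartiteBelow] at this
    simp only [nbr]
    convert this using 4
    exact H.adj_comm _ _
  have h1 : ((∑ x ∈ X, (nbr H Y x).card : ℕ) : ℝ) ≤ X.card * (1 / 128 * Y.card) := by
    push_cast
    calc _ ≤ ∑ x ∈ X, (1 / 128 * (Y.card : ℝ)) := Finset.sum_le_sum h
      _ = _ := by rw [Finset.sum_const, nsmul_eq_mul]
  have h2 : (Y2.card : ℝ) * (X.card / 32) ≤ ((∑ y ∈ Y, (nbr H X y).card : ℕ) : ℝ) := by
    push_cast
    calc (Y2.card : ℝ) * (X.card / 32) = ∑ y ∈ Y2, ((X.card : ℝ) / 32) := by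
          rw [Finset.sum_const, nsmul_eq_mul]
      _ ≤ ∑ y ∈ Y2, ((nbr H X y).card : ℝ) := by
          refine Finset.sum_le_sum fun y hy => ?_
          exact (not_le.1 (Finset.mem_filter.1 hy).2).le
      _ ≤ _ := Finset.sum_le_sum_of_subset_of_nonneg (Finset.filter_subset _ _)
          (fun _ _ _ => by positivity)
  rw [hdc] at h1
  have h3 : (X.card : ℝ) * (Y2.card / 32) ≤ X.card * (1 / 128 * Y.card) := by linarith
  have h4 := le_of_mul_le_mul_left h3 hX0
  linarith

theorem blocks_pair {V : Type} {H : SimpleGraph V} (hH : NoC5 H) {W : Finset V} {m ε : ℝ}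
    (hε : 0 < ε) (hm : 0 < m) (Z1 Z2 X Y : Finset V)
    (h1 : Z1 ⊆ W ∧ m ≤ Z1.card) (h2 : Z2 ⊆ W ∧ m ≤ Z2.card)
    (hX : X ⊆ W ∧ m ≤ X.card) (hY : Y ⊆ W ∧ m ≤ Y.card) (hε1 : ε ≤ 1)
    (s1X : Sparse H (1 / 128) Z1 X) (s1Y : Sparse H (1 / 128) Z1 Y)
    (s2X : Sparse H (1 / 128) Z2 X) (s2Y : Sparse H (1 / 128) Z2 Y)
    (sXY : Sparse H (1 / 128) X Y) :
    ∃ A B : Finset V, A ⊆ W ∧ B ⊆ W ∧ ε * (m / 32) ≤ A.card ∧ m / 32 ≤ B.card ∧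
      Sparse H ε A B := by
  by_contra! hcon
  have K : NoPair H W (ε * (m / 32)) (m / 32) ε := by
    intro A B hA hB hAc hBc
    have := hcon A B hA hB hAc hBc
    simp only [Sparse, not_forall, not_le] at this
    obtain ⟨x, hx, h⟩ := this
    exact ⟨x, hx, h⟩
  have hX0 : (0 : ℝ) < X.card := by linarith
  obtain ⟨Y', hY'Y, hY'c, hY'X⟩ := clean hX0 sXY
  have hY'0 : (0 : ℝ) < Y'.card := by linarith
  have hem : ε * (m / 32) ≤ m / 32 := by nlinarith
  obtain ⟨v, hv, hvN⟩ := K Z1 Z2 h1.1 h2.1 (by linarith) (by linarith)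
  have restr : ∀ x, ((nbr H Y x).card : ℝ) ≤ 1 / 128 * Y.card →
      ((nbr H Y' x).card : ℝ) ≤ Y'.card / 32 := by
    intro x hx
    have : ((nbr H Y' x).card : ℝ) ≤ (nbr H Y x).card := by
      exact_mod_cast Finset.card_le_card
        (fun y hy => mem_nbr.2 ⟨hY'Y (mem_nbr.1 hy).1, (mem_nbr.1 hy).2⟩)
    linarith
  have mono : ∀ r : ℝ, m / 32 ≤ r → ε * (m / 32) ≤ ε * r := fun r hr =>
    mul_le_mul_of_nonneg_left hr hε.le
  refine core hH hε K v (nbr H Z2 v) X Y' (nbr_sub.trans h2.1) hX.1 (hY'Y.trans hY.1) hX0 hY'0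
    ((mono _ (by linarith)).trans hvN.le) (fun x hx => (mem_nbr.1 hx).2) (by linarith)
    (by linarith) (mono _ (by linarith)) (mono _ (by linarith)) ?_ ?_ ?_ ?_ hY'X ?_
  · linarith [s1X v hv]
  · exact restr v (s1Y v hv)
  · intro p hp
    linarith [s2X p (nbr_sub hp)]
  · intro p hp
    exact restr p (s2Y p (nbr_sub hp))
  · intro x hx
    exact restr x (sXY x hx)

theorem pair_thm : ∃ c : ℝ, 0 < c ∧ c ≤ 1 ∧ ∀ (V : Type) (G : SimpleGraph V), NoC5 G →
      ∀ W : Finset V, W.Nonempty → ∀ ε : ℝ, 0 < ε → ε ≤ 1 →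
      ∃ A B : Finset V, A ⊆ W ∧ B ⊆ W ∧ ε * (c * W.card) ≤ A.card ∧ c * W.card ≤ B.card ∧
        ∃ H, (H = G ∨ H = Gᶜ) ∧ Sparse H ε A B := by
  obtain ⟨c, hc, hc1, HR⟩ := ramsey_blocks 8 4 4 rfl (1 / 128) (by norm_num) (by norm_num)
  refine ⟨c / 32, by positivity, by linarith, ?_⟩
  intro V G hG W hW ε hε hε1
  have hWc : (0 : ℝ) < W.card := by exact_mod_cast hW.card_pos
  obtain ⟨l, hl, hl'⟩ := HR V G hG W hW
  have main : ∀ H : SimpleGraph V, NoC5 H → l.length = 4 → l.Pairwise (Sparse H (1 / 128)) →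
      ∃ A B : Finset V, A ⊆ W ∧ B ⊆ W ∧ ε * (c * W.card / 32) ≤ A.card ∧ c * W.card / 32 ≤ B.card ∧
      Sparse H ε A B := by
    intro H hH hlen hp
    match l, hlen with
    | [Z1, Z2, X, Y], _ =>
      simp only [List.pairwise_cons, List.mem_cons, List.not_mem_nil, or_false, forall_eq_or_imp,
        forall_eq] at hp hl
      obtain ⟨hl1, hl2, hl3, hl4⟩ := hl
      obtain ⟨⟨-, p1, p2⟩, ⟨p3, p4⟩, p5, -⟩ := hp
      exact blocks_pair hH hε (by positivity) Z1 Z2 X Y hl1 hl2 hl3 hl4 hε1 p1 p2 p3 p4 p5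
  have e : c / 32 * (W.card : ℝ) = c * W.card / 32 := by ring
  rw [e]
  rcases hl' with ⟨h1, h2⟩ | ⟨h1, h2⟩
  · obtain ⟨A, B, hA, hB, hAc, hBc, hS⟩ := main G hG h1 h2
    exact ⟨A, B, hA, hB, hAc, hBc, G, Or.inl rfl, hS⟩
  · obtain ⟨A, B, hA, hB, hAc, hBc, hS⟩ := main Gᶜ hG.compl h1 h2
    exact ⟨A, B, hA, hB, hAc, hBc, Gᶜ, Or.inr rfl, hS⟩

theorem grow {V : Type} {G : SimpleGraph V} {c : ℝ} (hc : 0 < c) (hc1 : c ≤ 1)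
    (HA : ∀ W : Finset V, W.Nonempty → ∀ ε : ℝ, 0 < ε → ε ≤ 1 →
      ∃ A B : Finset V, A ⊆ W ∧ B ⊆ W ∧ ε * (c * W.card) ≤ A.card ∧ c * W.card ≤ B.card ∧
        ∃ H, (H = G ∨ H = Gᶜ) ∧ Sparse H ε A B)
    {m : ℝ} {t : ℕ} (hm : 1 ≤ m) (ht : 1 ≤ t)
    (hmt : ∀ W : Finset V, m ≤ W.card → ∃ J ⊆ W, Cog G J ∧ J.card = t) (k : ℕ) :
    ∀ W : Finset V, m * (4 * t / c) * (2 / c) ^ k ≤ W.card → ∃ J ⊆ W, Cog G J ∧ J.card = k * t := by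
  classical
  induction k with
  | zero => intro W _; exact ⟨∅, by simp, by intro a ha; simp at ha, by simp⟩
  | succ k ih =>
    intro W hW
    have ht' : (1 : ℝ) ≤ t := by exact_mod_cast ht
    have ht0 : (0 : ℝ) < t := by linarith
    have h2c : 1 ≤ 2 / c := by rw [le_div_iff₀ hc]; linarith
    have hpow : 1 ≤ (2 / c) ^ k := one_le_pow₀ h2c
    have hpow1 : 1 ≤ (2 / c) ^ (k + 1) := one_le_pow₀ h2c
    set M := m * (4 * t / c) with hM
    have hM0 : 0 < M := by positivity
    have hMW : M ≤ W.card := le_trans (by nlinarith) hW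
    have hW0 : (0 : ℝ) < W.card := by linarith
    have hcM : c * M = m * (4 * t) := by rw [hM]; field_simp
    obtain ⟨A, B, hA, hB, hAc, hBc, H, hH, hS⟩ := HA W
      (Finset.card_pos.1 (by exact_mod_cast hW0)) (1 / (4 * t)) (by positivity)
      (by rw [div_le_one (by positivity)]; linarith)
    have hcW : m * (4 * t) ≤ c * W.card := by
      rw [← hcM]; exact mul_le_mul_of_nonneg_left hMW hc.le
    have hAm : m ≤ A.card := by
      refine le_trans ?_ hAc
      rw [one_div, ← div_eq_inv_mul, le_div_iff₀ (by positivity)]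
      exact hcW
    obtain ⟨J, hJA, hJ, hJt⟩ := hmt A hAm
    set R := J.biUnion (fun j => nbr H B j) with hR
    set B' := (B \ R) \ J with hB'
    have hRc : (R.card : ℝ) ≤ B.card / 4 := by
      have h1 : (R.card : ℝ) ≤ ∑ j ∈ J, ((nbr H B j).card : ℝ) := by
        exact_mod_cast Finset.card_biUnion_le
      have h2 : ∑ j ∈ J, ((nbr H B j).card : ℝ) ≤ ∑ j ∈ J, (1 / (4 * t) * (B.card : ℝ)) :=
        Finset.sum_le_sum fun j hj => hS j (hJA hj)
      rw [Finset.sum_const, nsmul_eq_mul, hJt] at h2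
      have h3 : (t : ℝ) * (1 / (4 * t) * (B.card : ℝ)) = B.card / 4 := by field_simp
      linarith
    have hJc : (J.card : ℝ) ≤ B.card / 4 := by
      rw [hJt]
      have : 4 * (t : ℝ) ≤ m * (4 * t) := by nlinarith
      linarith
    have hB'c : c / 2 * W.card ≤ B'.card := by
      have h1 := card_sdiff_ge' (B \ R) J
      have h2 := card_sdiff_ge' B R
      linarith
    obtain ⟨J', hJ'B, hJ', hJ't⟩ := ih B' (by
      refine le_trans ?_ hB'c
      have h1 := mul_le_mul_of_nonneg_left hW (by positivity : 0 ≤ c / 2)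
      refine le_trans (le_of_eq ?_) h1
      rw [pow_succ]; field_simp)
    have hdisj : Disjoint J J' := by
      rw [Finset.disjoint_left]
      intro x hx hx'
      exact (Finset.mem_sdiff.1 (hJ'B hx')).2 hx
    refine ⟨J ∪ J', Finset.union_subset (hJA.trans hA)
      (hJ'B.trans ((Finset.sdiff_subset.trans Finset.sdiff_subset).trans hB)), ?_, ?_⟩
    · refine hJ.union hJ' hH hdisj ?_
      intro x hx y hy hxy
      have h1 := (Finset.mem_sdiff.1 (hJ'B hy)).1
      rw [Finset.mem_sdiff] at h1
      exact h1.2 (Finset.mem_biUnion.2 ⟨x, hx, mem_nbr.2 ⟨h1.1, hxy⟩⟩)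
    · rw [Finset.card_union_of_disjoint hdisj, hJt, hJ't]; ring

theorem lemma_D : ∃ C : ℕ, 1 ≤ C ∧ ∀ (V : Type) (G : SimpleGraph V), NoC5 G → ∀ k : ℕ, 1 ≤ k →
    ∀ r : ℕ, ∀ W : Finset V, (2 : ℝ) ^ (C * k * r) ≤ W.card →
      ∃ J ⊆ W, Cog G J ∧ min (k ^ r) (2 ^ k) ≤ J.card := by
  obtain ⟨c, hc, hc1, HA⟩ := pair_thm
  obtain ⟨C, hC⟩ := pow_unbounded_of_one_lt (16 / c ^ 2) (by norm_num : (1 : ℝ) < 2)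
  refine ⟨C + 1, by omega, ?_⟩
  have hC' : 16 / c ^ 2 ≤ (2 : ℝ) ^ (C + 1) :=
    hC.le.trans (pow_le_pow_right₀ (by norm_num) (by omega))
  generalize C + 1 = C at hC'
  intro V G hG k hk r
  induction r with
  | zero =>
    intro W hW
    simp at hW
    obtain ⟨x, hx⟩ := hW
    refine ⟨{x}, by simpa using hx, ?_, by simp⟩
    intro a ha b hb _ _ _ _ hab
    simp at ha hb
    subst ha hb
    exact absurd hab G.irrefl
  | succ r ih =>
    intro W hW
    rcases le_or_gt (k ^ r) (2 ^ k) with h | h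
    · have hmt : ∀ W : Finset V, (2 : ℝ) ^ (C * k * r) ≤ W.card →
          ∃ J ⊆ W, Cog G J ∧ J.card = k ^ r := by
        intro W hW
        obtain ⟨J, hJW, hJ, hJc⟩ := ih W hW
        rw [min_eq_left h] at hJc
        obtain ⟨J', hJ', hJ'c⟩ := Finset.exists_subset_card_eq hJc
        exact ⟨J', hJ'.trans hJW, hJ.mono hJ', hJ'c⟩
      obtain ⟨J, hJW, hJ, hJc⟩ := grow hc hc1 (HA V G hG) (one_le_pow₀ (by norm_num))
        (Nat.one_le_pow _ _ hk) hmt k W (by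
          refine le_trans ?_ hW
          have e : C * k * (r + 1) = C * k * r + C * k := by ring
          rw [e, pow_add, mul_assoc]
          refine mul_le_mul_of_nonneg_left ?_ (by positivity)
          have h4 : (1 : ℝ) ≤ 4 / c := by rw [le_div_iff₀ hc]; linarith
          have h5 : 4 / c ≤ (4 / c) ^ k := le_self_pow₀ h4 (by omega)
          have h6 : ((k ^ r : ℕ) : ℝ) ≤ 2 ^ k := by exact_mod_cast h
          calc 4 * ((k ^ r : ℕ) : ℝ) / c * (2 / c) ^ k
              = (4 / c) * ((k ^ r : ℕ) : ℝ) * (2 / c) ^ k := by ring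
            _ ≤ (4 / c) ^ k * 2 ^ k * (2 / c) ^ k := by gcongr
            _ = (16 / c ^ 2) ^ k := by
                rw [← mul_pow, ← mul_pow]; congr 1; field_simp; norm_num
            _ ≤ (2 ^ C) ^ k := by gcongr
            _ = 2 ^ (C * k) := by rw [pow_mul])
      refine ⟨J, hJW, hJ, (min_le_left _ _).trans ?_⟩
      rw [hJc, pow_succ, mul_comm]
    · obtain ⟨J, hJW, hJ, hJc⟩ := ih W (le_trans (by
        apply pow_le_pow_right₀ (by norm_num); apply Nat.mul_le_mul_left; omega) hW)
      rw [min_eq_right h.le] at hJc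
      exact ⟨J, hJW, hJ, (min_le_right _ _).trans hJc⟩

theorem cog_pair {V : Type} {G : SimpleGraph V} {s : Finset V} (hs : s.card = 2) : Cog G s := by
  classical
  obtain ⟨x, y, hxy, rfl⟩ := Finset.card_eq_two.1 hs
  intro a ha b hb c hc d hd ab bc cd ac bd ad
  have h1 := ab.ne
  have h2 := bc.ne
  have h3 := cd.ne
  simp only [Finset.mem_insert, Finset.mem_singleton] at ha hb hc hd
  have : b = d := by grind
  subst this
  exact ad ab

theorem log_bound {x : ℝ} (hx : 1 ≤ x) : Real.logb 2 x ≤ 4 * Real.sqrt x := by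
  have h0 : 0 < Real.sqrt x := Real.sqrt_pos.2 (by linarith)
  have e : Real.log x = 2 * Real.log (Real.sqrt x) := by
    rw [Real.log_sqrt (by linarith)]; ring
  have h1 := Real.log_le_sub_one_of_pos h0
  have h2 := Real.log_two_gt_d9
  rw [Real.logb, div_le_iff₀ (by linarith), e]
  nlinarith

theorem c5_free_large_cograph :
    ∃ c : ℝ, 0 < c ∧
      ∀ (n : ℕ) (G : SimpleGraph (Fin n)), 1 < n → C5Free G →
        ∃ s : Finset (Fin n), IsCograph (G.induce (s : Set (Fin n))) ∧
          (2 : ℝ) ^ (c * Real.sqrt (Real.logb 2 n * Real.logb 2 (Real.logb 2 n))) ≤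
            (s.card : ℝ) := by
  obtain ⟨C, hC, HD⟩ := lemma_D
  have hCr : (1 : ℝ) ≤ C := by exact_mod_cast hC
  have hC0 : (0 : ℝ) < C := by linarith
  refine ⟨1 / (16 * C ^ 4), by positivity, ?_⟩
  intro n G hn hG
  have hnr : (2 : ℝ) ≤ n := by exact_mod_cast hn
  set x := Real.logb 2 (n : ℝ) with hx
  set y := Real.logb 2 x with hy
  have hx1 : 1 ≤ x := by
    rw [hx, Real.le_logb_iff_rpow_le (by norm_num) (by linarith)]; simpa using hnr
  have hy0 : 0 ≤ y := Real.logb_nonneg (by norm_num) hx1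
  have h2x : (2 : ℝ) ^ x = n := Real.rpow_logb (by norm_num) (by norm_num) (by linarith)
  have h2y : (2 : ℝ) ^ y = x := Real.rpow_logb (by norm_num) (by norm_num) (by linarith)
  have hy4 : y ≤ 4 * Real.sqrt x := log_bound hx1
  have hsx : Real.sqrt x * Real.sqrt x = x := Real.mul_self_sqrt (by linarith)
  have hsx0 : 0 < Real.sqrt x := Real.sqrt_pos.2 (by linarith)
  set R := Real.sqrt (x * y) with hR
  have hRR : R * R = x * y := Real.mul_self_sqrt (by positivity)
  have hR0 : 0 ≤ R := Real.sqrt_nonneg _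
  have hC4 : (C : ℝ) ≤ C ^ 4 := le_self_pow₀ hCr (by norm_num)
  by_cases hlarge : 4 ≤ y ∧ (C : ℝ) ^ 2 * y ≤ x
  · obtain ⟨hy4', hxy⟩ := hlarge
    have hx16 : 16 ≤ x := by
      rw [← h2y]
      calc (16 : ℝ) = 2 ^ (4 : ℝ) := by norm_num
        _ ≤ 2 ^ y := Real.rpow_le_rpow_of_exponent_le (by norm_num) hy4'
    have hR8 : 8 ≤ R := Real.le_sqrt_of_sq_le (by nlinarith)
    have hRsx : 2 * Real.sqrt x ≤ R := by
      apply Real.le_sqrt_of_sq_le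
      nlinarith
    have hCR : C * R ≤ x := by
      have h := mul_le_mul_of_nonneg_left hxy (by linarith : 0 ≤ x)
      refine (sq_le_sq₀ (by positivity) (by linarith)).1 ?_
      calc ((C : ℝ) * R) ^ 2 = C ^ 2 * (R * R) := by ring
        _ = x * (C ^ 2 * y) := by rw [hRR]; ring
        _ ≤ x * x := h
        _ = x ^ 2 := by ring
    set k := ⌊R⌋₊ with hk
    have hkR : (k : ℝ) ≤ R := Nat.floor_le hR0
    have hkR' : R < k + 1 := Nat.lt_floor_add_one R
    have hk2 : R / 2 ≤ k := by linarith
    have hk0 : (0 : ℝ) < k := by linarith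
    have hk1 : 1 ≤ k := by exact_mod_cast (by linarith : (1 : ℝ) ≤ k)
    set q := x / (C * k) with hq
    have hq1 : 1 ≤ q := by
      rw [hq, le_div_iff₀ (by positivity)]
      nlinarith
    set r := ⌊q⌋₊ with hr
    have hrq : (r : ℝ) ≤ q := Nat.floor_le (by linarith)
    have hrq' : q < r + 1 := Nat.lt_floor_add_one q
    have hr1 : (1 : ℝ) ≤ r := by exact_mod_cast (Nat.one_le_floor_iff _).2 hq1
    have hrq2 : q / 2 ≤ r := by linarith
    obtain ⟨J, -, hJ, hJc⟩ := HD (Fin n) G hG.noC5 k hk1 r Finset.univ (by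
      rw [Finset.card_univ, Fintype.card_fin, ← h2x, ← Real.rpow_natCast]
      apply Real.rpow_le_rpow_of_exponent_le (by norm_num)
      push_cast
      have := mul_le_mul_of_nonneg_left hrq (by positivity : (0 : ℝ) ≤ C * k)
      have e : (C : ℝ) * k * q = x := by rw [hq]; field_simp
      linarith)
    refine ⟨J, hJ.isCograph, ?_⟩
    have hJc' : min ((k : ℝ) ^ r) (2 ^ k) ≤ J.card := by exact_mod_cast hJc
    refine le_trans (le_min ?_ ?_) hJc'
    · have hky : y / 2 ≤ Real.logb 2 k := by
        rw [Real.le_logb_iff_rpow_le (by norm_num) hk0]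
        have : (2 : ℝ) ^ (y / 2) = Real.sqrt x := by
          rw [Real.sqrt_eq_rpow, ← h2y, ← Real.rpow_mul (by norm_num)]
          congr 1; ring
        rw [this]; linarith
      have ek : (k : ℝ) ^ r = 2 ^ (Real.logb 2 k * r) := by
        rw [Real.rpow_mul (by norm_num), Real.rpow_logb (by norm_num) (by norm_num) hk0,
          Real.rpow_natCast]
      rw [ek]
      apply Real.rpow_le_rpow_of_exponent_le (by norm_num)
      have h1 : y / 2 * (q / 2) ≤ Real.logb 2 k * r := by
        apply mul_le_mul hky hrq2 (by linarith) (by linarith)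
      have h2 : R / (4 * C) ≤ y / 2 * (q / 2) := by
        have e : y / 2 * (q / 2) = (x * y) / (4 * C * k) := by rw [hq]; field_simp; norm_num
        rw [e, ← hRR, div_le_div_iff₀ (by positivity) (by positivity)]
        have := mul_le_mul_of_nonneg_left hkR (by positivity : 0 ≤ 4 * C * R)
        linarith
      have h3 : 1 / (16 * (C : ℝ) ^ 4) * R ≤ R / (4 * C) := by
        rw [one_div_mul_eq_div]
        apply div_le_div_of_nonneg_left hR0 (by positivity) (by linarith)
      linarith
    · rw [← Real.rpow_natCast 2 k]
      apply Real.rpow_le_rpow_of_exponent_le (by norm_num)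
      have h3 : 1 / (16 * (C : ℝ) ^ 4) * R ≤ R / 2 := by
        rw [one_div_mul_eq_div]
        apply div_le_div_of_nonneg_left hR0 (by positivity) (by linarith)
      linarith
  · have hxs : x ≤ 16 * C ^ 4 := by
      by_cases h4 : 4 ≤ y
      · have h5 : x < C ^ 2 * y := by
          by_contra! h; exact hlarge ⟨h4, h⟩
        have h6 : (C : ℝ) ^ 2 * y ≤ C ^ 2 * (4 * Real.sqrt x) :=
          mul_le_mul_of_nonneg_left hy4 (by positivity)
        have h7 : Real.sqrt x * Real.sqrt x ≤ (4 * C ^ 2) * Real.sqrt x := by linarith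
        have h8 := le_of_mul_le_mul_right h7 hsx0
        have h9 := mul_le_mul h8 h8 hsx0.le (by positivity)
        rw [hsx] at h9
        linarith
      · have : x ≤ 16 := by
          rw [← h2y]
          calc (2 : ℝ) ^ y ≤ 2 ^ (4 : ℝ) :=
                Real.rpow_le_rpow_of_exponent_le (by norm_num) (by linarith)
            _ = 16 := by norm_num
        linarith
    have hyx : y ≤ x := by
      rw [hy, Real.logb_le_iff_le_rpow (by norm_num) (by linarith), h2x]
      have h1 : x ≤ n := by
        rw [hx, Real.logb_le_iff_le_rpow (by norm_num) (by linarith), Real.rpow_natCast]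
        exact_mod_cast Nat.lt_two_pow_self.le
      exact h1
    have hRx : R ≤ x := Real.sqrt_le_iff.2 ⟨by linarith, by nlinarith⟩
    obtain ⟨s, -, hs⟩ := Finset.exists_subset_card_eq (s := (Finset.univ : Finset (Fin n)))
      (n := 2) (by rw [Finset.card_univ, Fintype.card_fin]; exact hn)
    refine ⟨s, (cog_pair hs).isCograph, ?_⟩
    rw [hs]
    calc (2 : ℝ) ^ (1 / (16 * (C : ℝ) ^ 4) * R) ≤ 2 ^ (1 : ℝ) := by
          apply Real.rpow_le_rpow_of_exponent_le (by norm_num)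
          rw [one_div_mul_eq_div, div_le_one (by positivity)]
          linarith
      _ = _ := by norm_num
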